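/- For a real number α, the exponent α is admissible for the fractional Haemers bound over the complex numbers H_f^ℂ if and only if α ≥ 1; that is, the functional (H_f^ℂ)_α defined by (H_f^ℂ)_α(⊕_{d=1}^r Ḡ_d ⊗ Q_d) = ∑_{d=1}^r H_f^ℂ(G_d)·d^α is monotone under cohomomorphisms of noncommutative graphs of this form exactly when α ≥ 1. -/

import Mathlib

open scoped Kronecker
open Matrix

namespace NCG

/-- Existence of a cohomomorphism from `T` to `S` (written `T ≤ S`). -/
def Cohom {A B : Type} [Fintype A] [DecidableEq A] [Fintype B] [DecidableEq B]
    (T : Submodule ℂ (Matrix B B ℂ)) (S : Submodule ℂ (Matrix A A ℂ)) : Prop :=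
  ∃ (k : ℕ) (E : Fin k → Matrix A B ℂ),
    (∑ i, (E i)ᴴ * E i) = 1 ∧ ∀ i j : Fin k, ∀ M ∈ S, (E i)ᴴ * M * E j ∈ T

/-- The noncommutative graph `Ḡ` of a classical graph `G`. -/
noncomputable def graphNC {V : Type} [Fintype V] [DecidableEq V] (G : SimpleGraph V) :
    Submodule ℂ (Matrix V V ℂ) :=
  Submodule.span ℂ {M | ∃ x y : V, (G.Adj x y ∨ x = y) ∧ M = Matrix.single x y 1}

/-- The confusability graph `Q_d = ℂ·I_d` of the noiseless `d`-dimensional quantum channel. -/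
noncomputable def qGraph (d : ℕ) : Submodule ℂ (Matrix (Fin d) (Fin d) ℂ) :=
  Submodule.span ℂ {(1 : Matrix (Fin d) (Fin d) ℂ)}

/-- Tensor product of noncommutative graphs. -/
noncomputable def ncTensor {A B : Type} [Fintype A] [DecidableEq A] [Fintype B] [DecidableEq B]
    (S : Submodule ℂ (Matrix A A ℂ)) (T : Submodule ℂ (Matrix B B ℂ)) :
    Submodule ℂ (Matrix (A × B) (A × B) ℂ) :=
  Submodule.span ℂ {M | ∃ X ∈ S, ∃ Y ∈ T, M = X ⊗ₖ Y}

/-- Direct sum of a finite family of noncommutative graphs. -/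
noncomputable def ncDirectSum {ι : Type} [Fintype ι] [DecidableEq ι] {V : ι → Type}
    [∀ i, Fintype (V i)] [∀ i, DecidableEq (V i)]
    (S : ∀ i, Submodule ℂ (Matrix (V i) (V i) ℂ)) :
    Submodule ℂ (Matrix (Σ i, V i) (Σ i, V i) ℂ) where
  carrier := {M | (∀ p q : Σ i, V i, p.1 ≠ q.1 → M p q = 0) ∧
    ∀ i, (Matrix.of fun x y : V i => M ⟨i, x⟩ ⟨i, y⟩) ∈ S i}
  add_mem' := by
    rintro a b ⟨ha1, ha2⟩ ⟨hb1, hb2⟩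
    refine ⟨fun p q h => ?_, fun i => ?_⟩
    · simp [Matrix.add_apply, ha1 p q h, hb1 p q h]
    · have h := (S i).add_mem (ha2 i) (hb2 i)
      exact h
  zero_mem' := by
    refine ⟨fun p q h => rfl, fun i => ?_⟩
    have h0 : (Matrix.of fun x y : V i =>
        (0 : Matrix (Σ j, V j) (Σ j, V j) ℂ) ⟨i, x⟩ ⟨i, y⟩) = 0 := rfl
    rw [h0]
    exact (S i).zero_mem
  smul_mem' := by
    rintro c a ⟨ha1, ha2⟩
    refine ⟨fun p q h => ?_, fun i => ?_⟩
    · simp [Matrix.smul_apply, ha1 p q h]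
    · have h := (S i).smul_mem c (ha2 i)
      exact h

/-- `⊕_{d=1}^r Ḡ_d ⊗ Q_d`, where `G d` plays the role of `G_{d+1}` for `d : Fin r`. -/
noncomputable def bigSum {r : ℕ} {V : Fin r → Type} [∀ d, Fintype (V d)] [∀ d, DecidableEq (V d)]
    (G : ∀ d, SimpleGraph (V d)) :
    Submodule ℂ (Matrix (Σ d : Fin r, V d × Fin (d.1 + 1))
      (Σ d : Fin r, V d × Fin (d.1 + 1)) ℂ) :=
  ncDirectSum fun d : Fin r => ncTensor (graphNC (G d)) (qGraph (d.1 + 1))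

/-- The extension `F_α` of a graph parameter `F` with exponent `α` is monotone under
cohomomorphisms of noncommutative graphs of the form `⊕_{d=1}^r Ḡ_d ⊗ Q_d`
(the exponent `α` is admissible for `F`). -/
def MonotoneExt (F : ∀ (V : Type) [Fintype V] [DecidableEq V], SimpleGraph V → ℝ)
    (α : ℝ) : Prop :=
  ∀ (r s : ℕ) (V : Fin r → Type) (W : Fin s → Type)
    [∀ d, Fintype (V d)] [∀ d, DecidableEq (V d)]
    [∀ d, Fintype (W d)] [∀ d, DecidableEq (W d)]
    (G : ∀ d, SimpleGraph (V d)) (H : ∀ d, SimpleGraph (W d)),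
    Cohom (bigSum H) (bigSum G) →
    ∑ d : Fin s, F (W d) (H d) * ((d.1 + 1 : ℕ) : ℝ) ^ α ≤
      ∑ d : Fin r, F (V d) (G d) * ((d.1 + 1 : ℕ) : ℝ) ^ α

/-- The fractional Haemers bound of a graph over a field `F`. -/
noncomputable def fracHaemers (F : Type) [Field F] {V : Type} [Fintype V] [DecidableEq V]
    (G : SimpleGraph V) : ℝ :=
  sInf {t : ℝ | ∃ (a b : ℕ) (S : V → Submodule F (Fin a → F)), 0 < b ∧
    (∀ g, Module.finrank F (S g) = b) ∧
    (∀ g, S g ⊓ (⨆ g' ∈ {g' : V | g' ≠ g ∧ ¬ G.Adj g g'}, S g') = ⊥) ∧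
    t = (a : ℝ) / (b : ℝ)}

/-- Subspaces indexed by the vertices of `G`, each of them independent of the span of those at
the other, non-adjacent vertices. -/
def IsSubspaceRep {V M : Type*} [AddCommGroup M] [Module ℂ M] (G : SimpleGraph V)
    (X : V → Submodule ℂ M) : Prop :=
  ∀ g, X g ⊓ (⨆ g' ∈ {g' : V | g' ≠ g ∧ ¬ G.Adj g g'}, X g') = ⊥

section SubspaceRep

variable {V M N : Type*} [AddCommGroup M] [Module ℂ M] [AddCommGroup N] [Module ℂ N]

lemma IsSubspaceRep.of_map {G : SimpleGraph V} {X : V → Submodule ℂ M} (hX : IsSubspaceRep G X)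
    {Y : V → Submodule ℂ N} (φ : N →ₗ[ℂ] M) (hφ : Function.Injective φ)
    (hY : ∀ g, (Y g).map φ = X g) : IsSubspaceRep G Y := by
  intro g
  apply Submodule.map_injective_of_injective hφ
  rw [Submodule.map_bot, Submodule.map_inf φ hφ]
  simp only [Submodule.map_iSup, hY]
  exact hX g

lemma IsSubspaceRep.pi_const {G : SimpleGraph V} {X : V → Submodule ℂ M}
    (hX : IsSubspaceRep G X) (k : ℕ) :
    IsSubspaceRep G fun g => Submodule.pi Set.univ fun _ : Fin k => X g := by
  intro g
  rw [eq_bot_iff]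
  rintro x ⟨hx, hx'⟩
  have hle : (⨆ g' ∈ {g' : V | g' ≠ g ∧ ¬ G.Adj g g'},
      Submodule.pi Set.univ fun _ : Fin k => X g') ≤
      Submodule.pi Set.univ fun _ : Fin k => ⨆ g' ∈ {g' : V | g' ≠ g ∧ ¬ G.Adj g g'}, X g' :=
    iSup₂_le fun g' hg' y hy i hi =>
      (le_iSup₂ (f := fun g' (_ : g' ∈ {g' : V | g' ≠ g ∧ ¬ G.Adj g g'}) => X g') g' hg') (hy i hi)
  have hxx := hle hx'
  rw [Submodule.mem_bot]
  funext i
  have : x i ∈ X g ⊓ (⨆ g' ∈ {g' : V | g' ≠ g ∧ ¬ G.Adj g g'}, X g') :=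
    ⟨hx i trivial, hxx i trivial⟩
  rw [hX g] at this
  exact this

lemma finrank_pi_const [FiniteDimensional ℂ M] (X : Submodule ℂ M) (k : ℕ) :
    Module.finrank ℂ (Submodule.pi Set.univ fun _ : Fin k => X) = k * Module.finrank ℂ X := by
  have e : (Submodule.pi Set.univ fun _ : Fin k => X) ≃ₗ[ℂ] (Fin k → X) :=
    { toFun := fun x i => ⟨x.1 i, x.2 i trivial⟩
      invFun := fun y => ⟨fun i => (y i).1, fun i _ => (y i).2⟩
      map_add' := fun _ _ => rfl
      map_smul' := fun _ _ => rfl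
      left_inv := fun _ => rfl
      right_inv := fun _ => rfl }
  rw [e.finrank_eq, Module.finrank_pi_fintype]
  simp

/-- A subspace representation can be carried over to coordinates. -/
lemma IsSubspaceRep.exists_fin [FiniteDimensional ℂ M]
    {G : SimpleGraph V} {X : V → Submodule ℂ M} (hX : IsSubspaceRep G X) :
    ∃ S : V → Submodule ℂ (Fin (Module.finrank ℂ M) → ℂ),
      (∀ g, Module.finrank ℂ (S g) = Module.finrank ℂ (X g)) ∧ IsSubspaceRep G S := by
  have e : M ≃ₗ[ℂ] (Fin (Module.finrank ℂ M) → ℂ) := (Module.finBasis ℂ M).equivFun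
  refine ⟨fun g => (X g).map e.toLinearMap, fun g => ?_, ?_⟩
  · exact LinearEquiv.finrank_map_eq e (X g)
  · refine hX.of_map e.symm.toLinearMap e.symm.injective fun g => ?_
    rw [← Submodule.map_comp]
    simp

lemma finrank_map_of_disjoint_ker (X : Submodule ℂ M) (φ : M →ₗ[ℂ] N)
    (h : Disjoint X (LinearMap.ker φ)) :
    Module.finrank ℂ (X.map φ) = Module.finrank ℂ X := by
  rw [← LinearMap.range_domRestrict]
  exact LinearMap.finrank_range_of_inj (LinearMap.injective_domRestrict_iff.2 h)

lemma finrank_sup_eq_add_finrank_map_mkQ [FiniteDimensional ℂ M] (A B : Submodule ℂ M) :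
    Module.finrank ℂ (A ⊔ B : Submodule ℂ M) =
      Module.finrank ℂ A + Module.finrank ℂ (B.map A.mkQ) := by
  have h₁ := (A ⊔ B).finrank_quotient_add_finrank
  have h₂ := A.finrank_quotient_add_finrank
  have h₃ := (B.map A.mkQ).finrank_quotient_add_finrank
  have h₄ := (Submodule.quotientQuotientEquivQuotientSup A B).finrank_eq
  omega

end SubspaceRep

section FracHaemers

variable {V : Type} [Fintype V] [DecidableEq V]

lemma fracHaemers_le_of_fin {G : SimpleGraph V} {a b : ℕ} {S : V → Submodule ℂ (Fin a → ℂ)}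
    (hb : 0 < b) (hS : ∀ g, Module.finrank ℂ (S g) = b) (hrep : IsSubspaceRep G S) :
    fracHaemers ℂ G ≤ (a : ℝ) / b := by
  refine csInf_le ⟨0, ?_⟩ ⟨a, b, S, hb, hS, hrep, rfl⟩
  rintro t ⟨a, b, -, -, -, -, rfl⟩
  positivity

lemma IsSubspaceRep.mul_fracHaemers_le {M : Type*} [AddCommGroup M] [Module ℂ M]
    [FiniteDimensional ℂ M] {G : SimpleGraph V} {X : V → Submodule ℂ M}
    (hX : IsSubspaceRep G X) {b : ℕ} (hb : 0 < b) (hXb : ∀ g, Module.finrank ℂ (X g) = b) :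
    (b : ℝ) * fracHaemers ℂ G ≤ Module.finrank ℂ (⨆ g, X g : Submodule ℂ M) := by
  set Z : Submodule ℂ M := ⨆ g, X g
  have hmap : ∀ g, ((X g).comap Z.subtype).map Z.subtype = X g := fun g => by
    rw [Submodule.map_comap_subtype]
    exact inf_eq_right.2 (le_iSup X g)
  have hrep : IsSubspaceRep G fun g => (X g).comap Z.subtype :=
    hX.of_map Z.subtype Z.injective_subtype hmap
  obtain ⟨S, hS, hS'⟩ := hrep.exists_fin
  have hle := fracHaemers_le_of_fin hb (fun g => (hS g).trans ?_) hS'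
  · rw [le_div_iff₀ (by exact_mod_cast hb)] at hle
    linarith
  · rw [← hXb g]
    conv_rhs => rw [← hmap g]
    exact (Submodule.finrank_map_subtype_eq ..).symm

lemma exists_fracHaemers_rep (G : SimpleGraph V) {ε : ℝ} (hε : 0 < ε) :
    ∃ (a b : ℕ) (S : V → Submodule ℂ (Fin a → ℂ)), 0 < b ∧
      (∀ g, Module.finrank ℂ (S g) = b) ∧ IsSubspaceRep G S ∧
      (a : ℝ) / b < fracHaemers ℂ G + ε := by
  have hrep : IsSubspaceRep G fun g : V => Submodule.span ℂ {(Pi.single g 1 : V → ℂ)} := by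
    intro g
    rw [eq_bot_iff]
    rintro x ⟨hx, hx'⟩
    have hle : (⨆ g' ∈ {g' : V | g' ≠ g ∧ ¬ G.Adj g g'},
        Submodule.span ℂ {(Pi.single g' 1 : V → ℂ)}) ≤ LinearMap.ker (LinearMap.proj g) := by
      refine iSup₂_le fun g' hg' => ?_
      rw [Submodule.span_singleton_le_iff_mem, LinearMap.mem_ker]
      simp [hg'.1.symm]
    have h0 : x g = 0 := hle hx'
    obtain ⟨c, rfl⟩ := Submodule.mem_span_singleton.1 hx
    have : c = 0 := by simpa using h0
    simp [this]
  obtain ⟨S, hS, hS'⟩ := hrep.exists_fin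
  obtain ⟨t, ⟨a, b, S, hb, hSb, hSi, rfl⟩, ht⟩ := exists_lt_of_csInf_lt (s := {t : ℝ |
    ∃ (a b : ℕ) (S : V → Submodule ℂ (Fin a → ℂ)), 0 < b ∧
    (∀ g, Module.finrank ℂ (S g) = b) ∧
    (∀ g, S g ⊓ (⨆ g' ∈ {g' : V | g' ≠ g ∧ ¬ G.Adj g g'}, S g') = ⊥) ∧
    t = (a : ℝ) / (b : ℝ)}) ⟨_, _, 1, S, one_pos,
      fun g => (hS g).trans (finrank_span_singleton (by simp)), hS', rfl⟩
    (lt_add_of_pos_right (fracHaemers ℂ G) hε)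
  exact ⟨a, b, S, hb, hSb, hSi, ht⟩

/-- Near-optimal subspace representations of finitely many graphs, with a common subspace
dimension. -/
lemma exists_common_fracHaemers_rep {ι : Type} [Fintype ι] {V : ι → Type} [∀ i, Fintype (V i)]
    [∀ i, DecidableEq (V i)] (G : ∀ i, SimpleGraph (V i)) {ε : ℝ} (hε : 0 < ε) :
    ∃ (b : ℕ) (a : ι → ℕ) (S : ∀ i, V i → Submodule ℂ (Fin (a i) → ℂ)), 0 < b ∧
      (∀ i g, Module.finrank ℂ (S i g) = b) ∧ (∀ i, IsSubspaceRep (G i) (S i)) ∧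
      ∀ i, (a i : ℝ) / b < fracHaemers ℂ (G i) + ε := by
  classical
  choose a b S hb hSb hrep hlt using fun i => exists_fracHaemers_rep (G i) hε
  choose T hT hTrep using fun i =>
    ((hrep i).pi_const (∏ j ∈ Finset.univ.erase i, b j)).exists_fin
  have hprod : ∀ i, (∏ j ∈ Finset.univ.erase i, b j) * b i = ∏ j, b j := fun i =>
    Finset.prod_erase_mul _ _ (Finset.mem_univ i)
  refine ⟨∏ j, b j, _, T, Finset.prod_pos fun j _ => hb j, fun i g => ?_, hTrep, fun i => ?_⟩
  · rw [hT, finrank_pi_const, hSb, hprod]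
  · have hk : (0 : ℝ) < (∏ j ∈ Finset.univ.erase i, b j : ℕ) := by
      exact_mod_cast Finset.prod_pos fun j _ => hb j
    rw [← hprod i, Module.finrank_pi_fintype]
    simp only [Module.finrank_fin_fun, Finset.sum_const, Finset.card_univ, Fintype.card_fin,
      smul_eq_mul, Nat.cast_mul]
    rw [mul_div_mul_left _ _ hk.ne']
    exact hlt i

end FracHaemers

/-- The disjoint union of a family of graphs. -/
def sigmaGraph {C : Type*} {W : C → Type*} (H : ∀ c, SimpleGraph (W c)) :
    SimpleGraph (Σ c, W c) where
  Adj p q := ∃ c x y, p = ⟨c, x⟩ ∧ q = ⟨c, y⟩ ∧ (H c).Adj x y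
  symm := ⟨fun _ _ ⟨c, x, y, hp, hq, h⟩ => ⟨c, y, x, hq, hp, h.symm⟩⟩
  loopless := ⟨by
    rintro _ ⟨c, x, y, rfl, hq, h⟩
    cases hq
    exact (H c).loopless.irrefl _ h⟩

lemma sigmaGraph_adj_mk {C : Type*} {W : C → Type*} {H : ∀ c, SimpleGraph (W c)} {c : C}
    {x y : W c} : (sigmaGraph H).Adj ⟨c, x⟩ ⟨c, y⟩ ↔ (H c).Adj x y := by
  constructor
  · rintro ⟨c', x', y', hp, hq, h⟩
    cases hp
    cases hq
    exact h
  · exact fun h => ⟨c, x, y, rfl, rfl, h⟩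

lemma sigmaGraph_adj_fst {C : Type*} {W : C → Type*} {H : ∀ c, SimpleGraph (W c)}
    {p q : Σ c, W c} (h : (sigmaGraph H).Adj p q) : p.1 = q.1 := by
  obtain ⟨c, x, y, rfl, rfl, -⟩ := h
  rfl

/-- Superadditivity of the fractional Haemers bound under disjoint unions, for subspace
representations whose dimension depends on the component. -/
lemma sum_mul_fracHaemers_le_finrank {C : Type} [Fintype C] {W : C → Type} [∀ c, Fintype (W c)]
    [∀ c, DecidableEq (W c)] {H : ∀ c, SimpleGraph (W c)} {M : Type*} [AddCommGroup M]
    [Module ℂ M] [FiniteDimensional ℂ M] {X : (Σ c, W c) → Submodule ℂ M}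
    (hX : IsSubspaceRep (sigmaGraph H) X) {l : C → ℕ} (hl : ∀ c, 0 < l c)
    (hXl : ∀ p, Module.finrank ℂ (X p) = l p.1) :
    ∑ c, (l c : ℝ) * fracHaemers ℂ (H c) ≤ Module.finrank ℂ M := by
  classical
  have key : ∀ s : Finset C, ∑ c ∈ s, (l c : ℝ) * fracHaemers ℂ (H c) ≤
      Module.finrank ℂ (⨆ c ∈ s, ⨆ w, X ⟨c, w⟩ : Submodule ℂ M) := by
    intro s
    induction s using Finset.induction_on with
    | empty => simp
    | insert c s hc ih =>
      rw [Finset.sum_insert hc, Finset.iSup_insert, sup_comm, finrank_sup_eq_add_finrank_map_mkQ,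
        Submodule.map_iSup]
      set A : Submodule ℂ M := ⨆ c ∈ s, ⨆ w, X ⟨c, w⟩
      have hAle : ∀ w, A ≤ ⨆ q ∈ {q | q ≠ (⟨c, w⟩ : Σ c, W c) ∧ ¬ (sigmaGraph H).Adj ⟨c, w⟩ q},
          X q := fun w => iSup₂_le fun c' hc' => iSup_le fun w' =>
        le_iSup₂ (f := fun q
          (_ : q ∈ {q | q ≠ (⟨c, w⟩ : Σ c, W c) ∧ ¬ (sigmaGraph H).Adj ⟨c, w⟩ q}) => X q) ⟨c', w'⟩
          ⟨fun h => hc ((show c' = c from congrArg Sigma.fst h) ▸ hc'),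
            fun h => hc ((show c' = c from (sigmaGraph_adj_fst h).symm) ▸ hc')⟩
      have hrep : IsSubspaceRep (H c) fun w => (X ⟨c, w⟩).map A.mkQ := by
        intro w
        rw [eq_bot_iff]
        rintro _ ⟨⟨x, hx, rfl⟩, hx'⟩
        simp only [← Submodule.map_iSup] at hx'
        obtain ⟨y, hy, hxy⟩ := hx'
        have hyle : (⨆ w' ∈ {w' | w' ≠ w ∧ ¬ (H c).Adj w w'}, X ⟨c, w'⟩) ≤
            ⨆ q ∈ {q | q ≠ (⟨c, w⟩ : Σ c, W c) ∧ ¬ (sigmaGraph H).Adj ⟨c, w⟩ q}, X q :=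
          iSup₂_le fun w' hw' => le_iSup₂ (f := fun q
            (_ : q ∈ {q | q ≠ (⟨c, w⟩ : Σ c, W c) ∧ ¬ (sigmaGraph H).Adj ⟨c, w⟩ q}) => X q) ⟨c, w'⟩
            ⟨fun h => hw'.1 (eq_of_heq (Sigma.mk.inj h).2), fun h => hw'.2 (sigmaGraph_adj_mk.1 h)⟩
        have hsub : x - y ∈ A := (Submodule.Quotient.eq A).1 hxy.symm
        have hmem : x ∈ X ⟨c, w⟩ ⊓ ⨆ q ∈ {q | q ≠ (⟨c, w⟩ : Σ c, W c) ∧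
            ¬ (sigmaGraph H).Adj ⟨c, w⟩ q}, X q :=
          ⟨hx, by simpa using add_mem (hAle w hsub) (hyle hy)⟩
        rw [hX] at hmem
        rw [(Submodule.mem_bot ℂ).1 hmem, map_zero]
        exact zero_mem _
      have hle := hrep.mul_fracHaemers_le (hl c) fun w => by
        rw [finrank_map_of_disjoint_ker, hXl]
        rw [Submodule.ker_mkQ]
        exact (disjoint_iff.2 (hX ⟨c, w⟩)).mono_right (hAle w)
      push_cast
      linarith
  exact (key Finset.univ).trans (by exact_mod_cast Submodule.finrank_le _)

section MatrixAction

variable {κ κ' κ'' M : Type*} [Fintype κ] [AddCommGroup M] [Module ℂ M]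

/-- A scalar matrix acting on vectors with entries in a vector space. -/
def matAct (J : Matrix κ' κ ℂ) : (κ → M) →ₗ[ℂ] (κ' → M) where
  toFun x k := ∑ q, J k q • x q
  map_add' x y := by
    funext k
    simp [Finset.sum_add_distrib]
  map_smul' c x := by
    funext k
    simp [Finset.smul_sum, smul_comm c]

lemma matAct_apply (J : Matrix κ' κ ℂ) (x : κ → M) (k : κ') :
    matAct J x k = ∑ q, J k q • x q := rfl

lemma matAct_matAct [Fintype κ'] (L : Matrix κ'' κ' ℂ) (J : Matrix κ' κ ℂ) (x : κ → M) :
    matAct L (matAct J x) = matAct (L * J) x := by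
  funext k
  simp only [matAct_apply, Matrix.mul_apply, Finset.smul_sum, Finset.sum_smul, smul_smul]
  exact Finset.sum_comm

lemma matAct_one [DecidableEq κ] (x : κ → M) : matAct (1 : Matrix κ κ ℂ) x = x := by
  funext k
  simp [matAct_apply, Matrix.one_apply]

lemma matAct_zero (x : κ → M) : matAct (0 : Matrix κ' κ ℂ) x = 0 := by
  funext k
  simp [matAct_apply]

lemma matAct_mem_pi (J : Matrix κ' κ ℂ) {U : Submodule ℂ M} {x : κ → M}
    (hx : x ∈ Submodule.pi Set.univ fun _ : κ => U) :
    matAct J x ∈ Submodule.pi Set.univ fun _ : κ' => U := fun _ _ =>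
  Submodule.sum_mem _ fun q _ => U.smul_mem _ (hx q trivial)

end MatrixAction

lemma matAct_single_mem {D : Type*} [DecidableEq D] {V : D → Type*} {G : ∀ d, SimpleGraph (V d)}
    {n : D → ℕ} {M : D → Type*} [∀ d, AddCommGroup (M d)] [∀ d, Module ℂ (M d)]
    (S : ∀ d, V d → Submodule ℂ (M d)) {κ κ' : Type*} [Fintype κ] [Fintype κ']
    (p q : Σ d, V d) (L : Matrix κ (Fin (n p.1)) ℂ) (K : ∀ d, V d → Matrix (Fin (n d)) κ' ℂ)
    (hLK : ∀ v', ((G p.1).Adj p.2 v' ∨ p.2 = v') → L * K p.1 v' = 0) {z : κ' → M q.1}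
    (hz : z ∈ Submodule.pi Set.univ fun _ : κ' => S q.1 q.2) :
    matAct L ((Pi.single q.1 (matAct (K q.1 q.2) z) : ∀ d, Fin (n d) → M d) p.1) ∈
      Submodule.pi Set.univ fun _ : κ =>
        ⨆ v' ∈ {v' | v' ≠ p.2 ∧ ¬ (G p.1).Adj p.2 v'}, S p.1 v' := by
  obtain ⟨d, v⟩ := p
  obtain ⟨d', v'⟩ := q
  dsimp only at *
  rcases eq_or_ne d d' with rfl | hd
  · rw [Pi.single_eq_same, matAct_matAct]
    by_cases hv : (G d).Adj v v' ∨ v = v'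
    · rw [hLK v' hv, matAct_zero]
      exact zero_mem _
    · push Not at hv
      exact fun i hi => (le_iSup₂ (f := fun v' (_ : v' ∈ {v' | v' ≠ v ∧ ¬ (G d).Adj v v'}) =>
        S d v') v' ⟨hv.2.symm, hv.1⟩) (matAct_mem_pi _ hz i hi)
  · rw [Pi.single_eq_of_ne hd, map_zero]
    exact zero_mem _

/-- The key estimate: nonzero blocks of Kraus operators turn subspace representations of the
`G d` into a subspace representation of the disjoint union of the `H c`. -/
lemma sum_fracHaemers_le_of_blocks {D C : Type} [Fintype D] [Fintype C] {V : D → Type}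
    {W : C → Type} [∀ c, Fintype (W c)] [∀ c, DecidableEq (W c)] {G : ∀ d, SimpleGraph (V d)}
    {H : ∀ c, SimpleGraph (W c)} {n : D → ℕ} {l : C → ℕ} (hl : ∀ c, 0 < l c)
    (E : ∀ (p : Σ c, W c) (d : D), V d → Matrix (Fin (n d)) (Fin (l p.1)) ℂ)
    (f : (Σ c, W c) → Σ d, V d) (γ : (Σ c, W c) → ℂ) (hγ : ∀ p, γ p ≠ 0)
    (hE : ∀ p, (E p (f p).1 (f p).2)ᴴ * E p (f p).1 (f p).2 = γ p • 1)
    (horth : ∀ p q, q ≠ p → ¬ (sigmaGraph H).Adj p q → ∀ d v v', ((G d).Adj v v' ∨ v = v') →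
      (E p d v)ᴴ * E q d v' = 0)
    {b : ℕ} (hb : 0 < b) {a : D → ℕ} (S : ∀ d, V d → Submodule ℂ (Fin (a d) → ℂ))
    (hSb : ∀ d v, Module.finrank ℂ (S d v) = b) (hS : ∀ d, IsSubspaceRep (G d) (S d)) :
    ∑ c, (l c : ℝ) * fracHaemers ℂ (H c) ≤ ∑ d, (n d : ℝ) * ((a d : ℝ) / b) := by
  classical
  let L : ∀ p, Matrix (Fin (l p.1)) (Fin (n (f p).1)) ℂ :=
    fun p => (γ p)⁻¹ • (E p (f p).1 (f p).2)ᴴ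
  let Φ : ∀ p : Σ c, W c, (Fin (l p.1) → Fin (a (f p).1) → ℂ) →ₗ[ℂ]
      (∀ d, Fin (n d) → Fin (a d) → ℂ) := fun p =>
    LinearMap.single ℂ (fun d => Fin (n d) → Fin (a d) → ℂ) (f p).1 ∘ₗ
      matAct (E p (f p).1 (f p).2)
  let Ψ : ∀ p : Σ c, W c, (∀ d, Fin (n d) → Fin (a d) → ℂ) →ₗ[ℂ]
      (Fin (l p.1) → Fin (a (f p).1) → ℂ) := fun p =>
    matAct (L p) ∘ₗ LinearMap.proj (f p).1
  have hΨΦ : ∀ p x, Ψ p (Φ p x) = x := fun p x => by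
    simp only [Ψ, Φ, LinearMap.comp_apply, LinearMap.proj_apply, LinearMap.single_apply,
      Pi.single_eq_same, matAct_matAct, L, Matrix.smul_mul, hE, smul_smul,
      inv_mul_cancel₀ (hγ p), one_smul, matAct_one]
  have hΦ : ∀ p, Function.Injective (Φ p) := fun p => Function.LeftInverse.injective (hΨΦ p)
  let X : (Σ c, W c) → Submodule ℂ (∀ d, Fin (n d) → Fin (a d) → ℂ) := fun p =>
    (Submodule.pi Set.univ fun _ : Fin (l p.1) => S (f p).1 (f p).2).map (Φ p)
  have hX : IsSubspaceRep (sigmaGraph H) X := by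
    intro p
    rw [eq_bot_iff]
    rintro _ ⟨⟨x, hx, rfl⟩, hx'⟩
    have hle : (⨆ q ∈ {q | q ≠ p ∧ ¬ (sigmaGraph H).Adj p q}, X q) ≤
        (Submodule.pi Set.univ fun _ : Fin (l p.1) =>
          ⨆ v' ∈ {v' | v' ≠ (f p).2 ∧ ¬ (G (f p).1).Adj (f p).2 v'}, S (f p).1 v').comap (Ψ p) := by
      refine iSup₂_le fun q hq => ?_
      rintro _ ⟨z, hz, rfl⟩
      refine matAct_single_mem S (f p) (f q) (L p) (E q) (fun v' hv' => ?_) hz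
      simp only [L, Matrix.smul_mul, horth p q hq.1 hq.2 _ _ _ hv', smul_zero]
    have hmem : x ∈ Submodule.pi Set.univ fun _ : Fin (l p.1) =>
        ⨆ v' ∈ {v' | v' ≠ (f p).2 ∧ ¬ (G (f p).1).Adj (f p).2 v'}, S (f p).1 v' := by
      have := hle hx'
      rwa [Submodule.mem_comap, hΨΦ] at this
    have hzero : x = 0 := by
      funext i
      have : x i ∈ S (f p).1 (f p).2 ⊓
          ⨆ v' ∈ {v' | v' ≠ (f p).2 ∧ ¬ (G (f p).1).Adj (f p).2 v'}, S (f p).1 v' :=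
        ⟨hx i trivial, hmem i trivial⟩
      rw [hS] at this
      exact this
    rw [hzero, map_zero]
    exact zero_mem _
  have hmain := sum_mul_fracHaemers_le_finrank hX (l := fun c => l c * b)
    (fun c => Nat.mul_pos (hl c) hb) fun p => by
      rw [finrank_map_of_disjoint_ker, finrank_pi_const, hSb]
      rw [LinearMap.ker_eq_bot.2 (hΦ p)]
      exact disjoint_bot_right
  have hb' : (0 : ℝ) < b := by exact_mod_cast hb
  have hrank : (Module.finrank ℂ (∀ d, Fin (n d) → Fin (a d) → ℂ) : ℝ) =
      (∑ d, (n d : ℝ) * ((a d : ℝ) / b)) * b := by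
    rw [Module.finrank_pi_fintype, Finset.sum_mul, Nat.cast_sum]
    refine Finset.sum_congr rfl fun d _ => ?_
    rw [Module.finrank_pi_fintype]
    simp only [Module.finrank_fin_fun, Finset.sum_const, Finset.card_univ, Fintype.card_fin,
      smul_eq_mul, Nat.cast_mul]
    field_simp
  rw [hrank] at hmain
  refine le_of_mul_le_mul_right (le_trans (le_of_eq ?_) hmain) hb'
  rw [Finset.sum_mul]
  refine Finset.sum_congr rfl fun c _ => ?_
  push_cast
  ring

section Membership

variable {V : Type} [Fintype V] [DecidableEq V]

lemma graphNC_apply_eq_zero {G : SimpleGraph V} {A : Matrix V V ℂ} (hA : A ∈ graphNC G) {x y : V}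
    (hxy : ¬ (G.Adj x y ∨ x = y)) : A x y = 0 := by
  induction hA using Submodule.span_induction with
  | mem A hA =>
    obtain ⟨x', y', h, rfl⟩ := hA
    rw [Matrix.single_apply_of_ne]
    rintro ⟨rfl, rfl⟩
    exact hxy h
  | zero => rfl
  | add A B _ _ hA hB => simp [hA, hB]
  | smul c A _ hA => simp [hA]

lemma one_mem_graphNC (G : SimpleGraph V) : (1 : Matrix V V ℂ) ∈ graphNC G := by
  rw [← Matrix.diagonal_one, ← Matrix.sum_single_eq_diagonal]
  exact Submodule.sum_mem _ fun x _ => Submodule.subset_span ⟨x, x, Or.inr rfl, rfl⟩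

lemma kronecker_one_mem_ncTensor {S : Submodule ℂ (Matrix V V ℂ)} {A : Matrix V V ℂ} (hA : A ∈ S)
    (n : ℕ) : A ⊗ₖ (1 : Matrix (Fin n) (Fin n) ℂ) ∈ ncTensor S (qGraph n) :=
  Submodule.subset_span ⟨A, hA, 1, Submodule.mem_span_singleton_self _, rfl⟩

lemma exists_eq_kronecker_one {S : Submodule ℂ (Matrix V V ℂ)} {n : ℕ}
    {N : Matrix (V × Fin n) (V × Fin n) ℂ} (hN : N ∈ ncTensor S (qGraph n)) :
    ∃ A ∈ S, N = A ⊗ₖ (1 : Matrix (Fin n) (Fin n) ℂ) := by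
  induction hN using Submodule.span_induction with
  | mem N hN =>
    obtain ⟨A, hA, Y, hY, rfl⟩ := hN
    obtain ⟨c, rfl⟩ := Submodule.mem_span_singleton.1 hY
    exact ⟨c • A, S.smul_mem c hA, by rw [Matrix.kronecker_smul, Matrix.smul_kronecker]⟩
  | zero => exact ⟨0, S.zero_mem, by rw [Matrix.zero_kronecker]⟩
  | add N N' _ _ hN hN' =>
    obtain ⟨A, hA, rfl⟩ := hN
    obtain ⟨B, hB, rfl⟩ := hN'
    exact ⟨A + B, S.add_mem hA hB, by rw [Matrix.add_kronecker]⟩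
  | smul c N _ hN =>
    obtain ⟨A, hA, rfl⟩ := hN
    exact ⟨c • A, S.smul_mem c hA, by rw [Matrix.smul_kronecker]⟩

end Membership

section BigSum

variable {r : ℕ} {V : Fin r → Type} [∀ d, Fintype (V d)] [∀ d, DecidableEq (V d)]
  {G : ∀ d, SimpleGraph (V d)}

lemma bigSum_apply_same {N : Matrix (Σ d : Fin r, V d × Fin (d.1 + 1))
    (Σ d : Fin r, V d × Fin (d.1 + 1)) ℂ} (hN : N ∈ bigSum G) (d : Fin r) :
    ∃ A ∈ graphNC (G d), ∀ v v' k k',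
      N ⟨d, v, k⟩ ⟨d, v', k'⟩ = A v v' * (1 : Matrix (Fin (d.1 + 1)) (Fin (d.1 + 1)) ℂ) k k' := by
  obtain ⟨A, hA, h⟩ := exists_eq_kronecker_one (hN.2 d)
  exact ⟨A, hA, fun v v' k k' => congrFun (congrFun h (v, k)) (v', k')⟩

lemma bigSum_apply_eq_zero {N : Matrix (Σ d : Fin r, V d × Fin (d.1 + 1))
    (Σ d : Fin r, V d × Fin (d.1 + 1)) ℂ} (hN : N ∈ bigSum G) {p q : Σ d, V d}
    (hne : q ≠ p) (hadj : ¬ (sigmaGraph G).Adj p q) (k : Fin (p.1.1 + 1)) (k' : Fin (q.1.1 + 1)) :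
    N ⟨p.1, p.2, k⟩ ⟨q.1, q.2, k'⟩ = 0 := by
  obtain ⟨d, v⟩ := p
  obtain ⟨d', v'⟩ := q
  rcases eq_or_ne d d' with rfl | hd
  · obtain ⟨A, hA, h⟩ := bigSum_apply_same hN d
    rw [h, graphNC_apply_eq_zero hA, zero_mul]
    rintro (h | rfl)
    · exact hadj (sigmaGraph_adj_mk.2 h)
    · exact hne rfl
  · exact hN.1 _ _ hd

lemma one_mem_bigSum (G : ∀ d, SimpleGraph (V d)) :
    (1 : Matrix (Σ d : Fin r, V d × Fin (d.1 + 1)) (Σ d : Fin r, V d × Fin (d.1 + 1)) ℂ) ∈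
      bigSum G := by
  refine ⟨fun p q h => Matrix.one_apply_ne fun hpq => h (congrArg Sigma.fst hpq), fun d => ?_⟩
  convert kronecker_one_mem_ncTensor (one_mem_graphNC (G d)) (d.1 + 1) using 1
  ext x y
  rw [Matrix.one_kronecker_one]
  simp [Matrix.one_apply]

/-- The element `|v⟩⟨v'| ⊗ I` of the `d`-th summand. -/
noncomputable def blockUnit (d : Fin r) (v v' : V d) :
    Matrix (Σ d : Fin r, V d × Fin (d.1 + 1)) (Σ d : Fin r, V d × Fin (d.1 + 1)) ℂ :=
  ∑ k : Fin (d.1 + 1), Matrix.single ⟨d, v, k⟩ ⟨d, v', k⟩ 1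

lemma blockUnit_mem_bigSum {d : Fin r} {v v' : V d} (h : (G d).Adj v v' ∨ v = v') :
    blockUnit d v v' ∈ bigSum G := by
  refine ⟨fun p q hpq => ?_, fun c => ?_⟩
  · rw [blockUnit, Matrix.sum_apply]
    refine Finset.sum_eq_zero fun k _ => Matrix.single_apply_of_ne _ _ _ _ _ ?_
    rintro ⟨rfl, rfl⟩
    exact hpq rfl
  · rcases eq_or_ne d c with rfl | hd
    · have hmem := kronecker_one_mem_ncTensor
        (Submodule.subset_span ⟨v, v', h, rfl⟩ : Matrix.single v v' (1 : ℂ) ∈ graphNC (G d))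
        (d.1 + 1)
      refine (congrArg (· ∈ ncTensor (graphNC (G d)) (qGraph (d.1 + 1))) (Matrix.ext ?_)).mpr hmem
      rintro ⟨x, k⟩ ⟨y, k'⟩
      simp only [blockUnit, Matrix.of_apply, Matrix.sum_apply, Matrix.kronecker_apply,
        Matrix.single_apply, Matrix.one_apply, Sigma.mk.injEq, heq_eq_eq, true_and, Prod.mk.injEq]
      rw [Finset.sum_eq_single k]
      · by_cases hx : v = x <;> by_cases hy : v' = y <;> by_cases hk : k = k' <;> simp [hx, hy, hk]
      · intro j _ hj
        simp [hj]
      · simp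
    · convert Submodule.zero_mem (ncTensor (graphNC (G c)) (qGraph (c.1 + 1))) using 1
      ext x y
      simp only [blockUnit, Matrix.of_apply, Matrix.sum_apply, Matrix.zero_apply]
      refine Finset.sum_eq_zero fun k _ => Matrix.single_apply_of_ne _ _ _ _ _ ?_
      rintro ⟨h, -⟩
      exact hd (congrArg Sigma.fst h)

/-- The block of a matrix with row index in `|v⟩ ⊗ ℂ^(d+1)` and column index in
`|p.2⟩ ⊗ ℂ^(p.1+1)`. -/
def block {s : ℕ} {W : Fin s → Type} (E : Matrix (Σ d : Fin r, V d × Fin (d.1 + 1))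
    (Σ e : Fin s, W e × Fin (e.1 + 1)) ℂ) (p : Σ e, W e) (d : Fin r) (v : V d) :
    Matrix (Fin (d.1 + 1)) (Fin (p.1.1 + 1)) ℂ :=
  Matrix.of fun k x => E ⟨d, v, k⟩ ⟨p.1, p.2, x⟩

lemma block_conjTranspose_mul_block {s : ℕ} {W : Fin s → Type}
    (E F : Matrix (Σ d : Fin r, V d × Fin (d.1 + 1)) (Σ e : Fin s, W e × Fin (e.1 + 1)) ℂ)
    (p q : Σ e, W e) (d : Fin r) (v v' : V d) (x : Fin (p.1.1 + 1)) (y : Fin (q.1.1 + 1)) :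
    ((block E p d v)ᴴ * block F q d v') x y =
      (Eᴴ * blockUnit d v v' * F) ⟨p.1, p.2, x⟩ ⟨q.1, q.2, y⟩ := by
  rw [blockUnit, Matrix.mul_sum, Matrix.sum_mul, Matrix.sum_apply, Matrix.mul_apply]
  refine Finset.sum_congr rfl fun k _ => ?_
  rw [Matrix.mul_assoc, Matrix.mul_apply, Finset.sum_eq_single ⟨d, v, k⟩]
  · rw [Matrix.single_mul_apply_same]
    simp [block]
  · intro a _ ha
    rw [Matrix.single_mul_apply_of_ne _ _ _ _ _ ha, mul_zero]
  · simp

end BigSum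

open scoped ComplexOrder in
/-- The summands of size at least `m + 1` of a cohomomorphism satisfy the monotonicity
inequality with exponent `1`. -/
lemma Cohom.sum_fracHaemers_le {r s : ℕ} {V : Fin r → Type} {W : Fin s → Type}
    [∀ d, Fintype (V d)] [∀ d, DecidableEq (V d)] [∀ e, Fintype (W e)] [∀ e, DecidableEq (W e)]
    {G : ∀ d, SimpleGraph (V d)} {H : ∀ e, SimpleGraph (W e)}
    (h : Cohom (bigSum H) (bigSum G)) (m : ℕ) :
    ∑ e : {e : Fin s // m ≤ e.1}, ((e.1.1 + 1 : ℕ) : ℝ) * fracHaemers ℂ (H e.1) ≤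
      ∑ d : {d : Fin r // m ≤ d.1}, ((d.1.1 + 1 : ℕ) : ℝ) * fracHaemers ℂ (G d.1) := by
  obtain ⟨k, E, hE, hEmem⟩ := h
  have hblock : ∀ p : Σ e, W e, ∃ (i : Fin k) (d : Fin r) (v : V d) (γ : ℂ), γ ≠ 0 ∧
      (block (E i) p d v)ᴴ * block (E i) p d v = γ • 1 ∧ p.1.1 ≤ d.1 := by
    intro p
    have hne : ∃ i d, ∃ (v : V d) (j : Fin (d.1 + 1)), E i ⟨d, v, j⟩ ⟨p.1, p.2, 0⟩ ≠ 0 := by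
      by_contra! hzero
      have h1 := congrFun (congrFun hE ⟨p.1, p.2, 0⟩) ⟨p.1, p.2, 0⟩
      rw [Matrix.sum_apply, Matrix.one_apply_eq, Finset.sum_eq_zero] at h1
      · exact zero_ne_one h1
      · intro i _
        rw [Matrix.mul_apply]
        exact Finset.sum_eq_zero fun a _ => by rw [hzero i a.1 a.2.1 a.2.2, mul_zero]
    obtain ⟨i, d, v, j, hij⟩ := hne
    obtain ⟨A, -, hA⟩ := bigSum_apply_same
      (hEmem i i _ (blockUnit_mem_bigSum (G := G) (d := d) (Or.inr (rfl : v = v)))) p.1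
    have hmul : (block (E i) p d v)ᴴ * block (E i) p d v = A p.2 p.2 • 1 := by
      ext x y
      rw [block_conjTranspose_mul_block, hA, Matrix.smul_apply, smul_eq_mul]
    have hγ : A p.2 p.2 ≠ 0 := by
      intro h0
      rw [h0, zero_smul, Matrix.conjTranspose_mul_self_eq_zero] at hmul
      exact hij (congrFun (congrFun hmul j) 0)
    refine ⟨i, d, v, A p.2 p.2, hγ, hmul, ?_⟩
    have hrank : (block (E i) p d v).rank = p.1.1 + 1 := by
      rw [← Matrix.rank_conjTranspose_mul_self, hmul, Matrix.rank_of_isUnit,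
        Fintype.card_fin]
      exact isUnit_one.smul (Units.mk0 _ hγ)
    have := (block (E i) p d v).rank_le_card_height
    rw [hrank, Fintype.card_fin] at this
    omega
  choose i d v γ hγ hmul hle using hblock
  refine le_of_forall_pos_le_add fun η hη => ?_
  set K : ℝ := ∑ d : {d : Fin r // m ≤ d.1}, ((d.1.1 + 1 : ℕ) : ℝ) with hK
  have hK0 : 0 ≤ K := Finset.sum_nonneg fun _ _ => Nat.cast_nonneg _
  have hε : 0 < η / (K + 1) := by positivity
  obtain ⟨b, a, S, hb, hSb, hS, hlt⟩ := exists_common_fracHaemers_rep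
    (fun d : {d : Fin r // m ≤ d.1} => G d.1) hε
  have hmain := sum_fracHaemers_le_of_blocks (D := {d : Fin r // m ≤ d.1})
    (C := {e : Fin s // m ≤ e.1}) (G := fun d => G d.1) (H := fun e => H e.1)
    (n := fun d => d.1.1 + 1) (l := fun e => e.1.1 + 1) (fun _ => Nat.succ_pos _)
    (fun p d v => block (E (i ⟨p.1.1, p.2⟩)) ⟨p.1.1, p.2⟩ d.1 v)
    (fun p => ⟨⟨d ⟨p.1.1, p.2⟩, p.1.2.trans (hle ⟨p.1.1, p.2⟩)⟩, v ⟨p.1.1, p.2⟩⟩)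
    (fun p => γ ⟨p.1.1, p.2⟩) (fun p => hγ _) (fun p => hmul ⟨p.1.1, p.2⟩)
    (fun p q hne hadj d v v' hv => ?_) hb S hSb hS
  · refine hmain.trans ?_
    calc ∑ d : {d : Fin r // m ≤ d.1}, ((d.1.1 + 1 : ℕ) : ℝ) * ((a d : ℝ) / b)
        ≤ ∑ d : {d : Fin r // m ≤ d.1}, ((d.1.1 + 1 : ℕ) : ℝ) *
            (fracHaemers ℂ (G d.1) + η / (K + 1)) :=
          Finset.sum_le_sum fun d _ =>
            mul_le_mul_of_nonneg_left (hlt d).le (Nat.cast_nonneg _)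
      _ = ∑ d : {d : Fin r // m ≤ d.1}, ((d.1.1 + 1 : ℕ) : ℝ) * fracHaemers ℂ (G d.1) +
            K * (η / (K + 1)) := by
          simp only [mul_add, Finset.sum_add_distrib, hK, Finset.sum_mul]
      _ ≤ _ := by
          have : K * (η / (K + 1)) ≤ η := by
            rw [mul_div_assoc', div_le_iff₀ (by positivity)]
            nlinarith
          linarith
  · ext x y
    rw [block_conjTranspose_mul_block]
    refine bigSum_apply_eq_zero (hEmem _ _ _ (blockUnit_mem_bigSum hv))
      (p := ⟨p.1.1, p.2⟩) (q := ⟨q.1.1, q.2⟩) ?_ ?_ x y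
    · rintro heq
      obtain ⟨⟨c, hc⟩, w⟩ := p
      obtain ⟨⟨c', hc'⟩, w'⟩ := q
      cases heq
      exact hne rfl
    · rintro ⟨c, w, w', hp, hq, hww⟩
      obtain ⟨⟨c₁, hc₁⟩, w₁⟩ := p
      obtain ⟨⟨c₂, hc₂⟩, w₂⟩ := q
      cases hp
      cases hq
      exact hadj (sigmaGraph_adj_mk.2 hww)

/-- Domination of tail sums is preserved by nondecreasing nonnegative weights. -/
lemma sum_mul_le_sum_mul_of_tail_le {r s : ℕ} (g : Fin r → ℝ) (h : Fin s → ℝ) (c : ℕ → ℝ)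
    (hc : Monotone c) (hc0 : 0 ≤ c 0)
    (htail : ∀ m : ℕ, ∑ e : {e : Fin s // m ≤ e.1}, h e.1 ≤ ∑ d : {d : Fin r // m ≤ d.1}, g d.1) :
    ∑ e, h e * c e.1 ≤ ∑ d, g d * c d.1 := by
  have expand : ∀ {t : ℕ} (u : Fin t → ℝ) (N : ℕ), t ≤ N → ∑ e, u e * c e.1 =
      c 0 * (∑ e : {e : Fin t // 0 ≤ e.1}, u e.1) +
        ∑ m ∈ Finset.range N, (c (m + 1) - c m) * ∑ e : {e : Fin t // m + 1 ≤ e.1}, u e.1 := by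
    intro t u N hN
    have htoSum : ∀ m : ℕ, ∑ e : {e : Fin t // m ≤ e.1}, u e.1 =
        ∑ e, if m ≤ e.1 then u e else 0 := fun m => by
      rw [← Finset.sum_filter]
      exact (Finset.sum_subtype _ (by simp) _).symm
    simp only [htoSum, Finset.mul_sum]
    rw [Finset.sum_comm, ← Finset.sum_add_distrib]
    refine Finset.sum_congr rfl fun e _ => ?_
    have hsum : ∑ m ∈ Finset.range N, (c (m + 1) - c m) * (if m + 1 ≤ e.1 then u e else 0) =
        ∑ m ∈ Finset.range e.1, (c (m + 1) - c m) * u e := by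
      rw [← Finset.sum_subset (Finset.range_mono (e.2.le.trans hN))]
      · refine Finset.sum_congr rfl fun m hm => ?_
        rw [if_pos (Nat.succ_le_of_lt (Finset.mem_range.1 hm))]
      · intro m _ hm
        rw [if_neg fun hle : m + 1 ≤ e.1 => hm (Finset.mem_range.2 hle), mul_zero]
    rw [hsum, ← Finset.sum_mul, Finset.sum_range_sub, if_pos (Nat.zero_le _)]
    ring
  rw [expand h (max r s) (le_max_right _ _), expand g (max r s) (le_max_left _ _)]
  refine add_le_add (mul_le_mul_of_nonneg_left (htail 0) hc0) (Finset.sum_le_sum fun m _ => ?_)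
  exact mul_le_mul_of_nonneg_left (htail (m + 1)) (sub_nonneg.2 (hc m.le_succ))

lemma monotoneExt_of_one_le {α : ℝ} (hα : 1 ≤ α) :
    MonotoneExt (fun (V : Type) (iV : Fintype V) (eV : DecidableEq V)
      (G : SimpleGraph V) => @fracHaemers ℂ _ V iV eV G) α := by
  intro r s V W _ _ _ _ G H hcohom
  have hpow : ∀ n : ℕ, ((n + 1 : ℕ) : ℝ) ^ α = ((n + 1 : ℕ) : ℝ) * ((n + 1 : ℕ) : ℝ) ^ (α - 1) := by
    intro n
    have hn : (0 : ℝ) < (n + 1 : ℕ) := by exact_mod_cast n.succ_pos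
    rw [Real.rpow_sub_one hn.ne', mul_div_cancel₀ _ hn.ne']
  have hmain := sum_mul_le_sum_mul_of_tail_le
    (fun d => ((d.1 + 1 : ℕ) : ℝ) * fracHaemers ℂ (G d))
    (fun e => ((e.1 + 1 : ℕ) : ℝ) * fracHaemers ℂ (H e))
    (fun n => ((n + 1 : ℕ) : ℝ) ^ (α - 1))
    (fun m n hmn => Real.rpow_le_rpow (Nat.cast_nonneg _) (by exact_mod_cast Nat.succ_le_succ hmn)
      (by linarith)) (by positivity) hcohom.sum_fracHaemers_le
  simpa only [hpow, ← mul_assoc, mul_comm (fracHaemers ℂ _) (Nat.cast _)] using hmain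

lemma cohom_two_points_qubit :
    Cohom (bigSum fun _ : Fin 1 => (⊥ : SimpleGraph (Fin 2)))
      (bigSum fun d : Fin 2 => (⊥ : SimpleGraph (Fin d.1))) := by
  let E : Matrix (Σ d : Fin 2, Fin d.1 × Fin (d.1 + 1))
      (Σ d : Fin 1, Fin 2 × Fin (d.1 + 1)) ℂ :=
    Matrix.of fun a b => if a.2.2.1 = b.2.1.1 then 1 else 0
  have hmul : ∀ M : Matrix (Σ d : Fin 2, Fin d.1 × Fin (d.1 + 1))
      (Σ d : Fin 2, Fin d.1 × Fin (d.1 + 1)) ℂ, ∀ p q,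
      (Eᴴ * M * E) p q = M ⟨1, (0 : Fin 1), p.2.1⟩ ⟨1, (0 : Fin 1), q.2.1⟩ := by
    rintro M ⟨e, w, x⟩ ⟨e', w', x'⟩
    fin_cases w <;> fin_cases w' <;>
    simp [E, Matrix.mul_apply, Fintype.sum_sigma, Fintype.sum_prod_type, Fin.sum_univ_two]
  have hone : ∀ c : ℂ, ∀ N : Matrix (Σ d : Fin 1, Fin 2 × Fin (d.1 + 1))
      (Σ d : Fin 1, Fin 2 × Fin (d.1 + 1)) ℂ,
      (∀ p q, N p q = c * (1 : Matrix (Fin 2) (Fin 2) ℂ) p.2.1 q.2.1) → N = c • 1 := by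
    intro c N hN
    ext ⟨e, w, x⟩ ⟨e', w', x'⟩
    fin_cases e
    fin_cases e'
    fin_cases x
    fin_cases x'
    rw [hN]
    simp [Matrix.one_apply]
  refine ⟨1, fun _ => E, ?_, fun _ _ M hM => ?_⟩
  · rw [Fin.sum_univ_one, ← one_smul ℂ (1 : Matrix _ _ ℂ)]
    refine hone 1 _ fun p q => ?_
    rw [← Matrix.mul_one Eᴴ, hmul]
    simp [Matrix.one_apply]
  · obtain ⟨A, -, hA⟩ := bigSum_apply_same hM 1
    rw [hone (A (0 : Fin 1) (0 : Fin 1)) (Eᴴ * M * E) fun p q =>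
      (hmul M p q).trans (hA (0 : Fin 1) (0 : Fin 1) p.2.1 q.2.1)]
    exact Submodule.smul_mem _ _ (one_mem_bigSum _)

lemma two_le_fracHaemers_two_points : 2 ≤ fracHaemers ℂ (⊥ : SimpleGraph (Fin 2)) := by
  refine le_of_forall_pos_le_add fun ε hε => ?_
  obtain ⟨a, b, S, hb, hSb, hS, hlt⟩ := exists_fracHaemers_rep (⊥ : SimpleGraph (Fin 2)) hε
  refine le_trans ?_ hlt.le
  have hinf : S 0 ⊓ S 1 = ⊥ := by
    rw [eq_bot_iff, ← hS 0]
    exact inf_le_inf_left _ (le_iSup₂ (f := fun g'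
      (_ : g' ∈ {g' : Fin 2 | g' ≠ 0 ∧ ¬ (⊥ : SimpleGraph (Fin 2)).Adj 0 g'}) => S g') 1 (by simp))
  have hdim := Submodule.finrank_sup_add_finrank_inf_eq (S 0) (S 1)
  rw [hinf, finrank_bot, hSb, hSb] at hdim
  have hle := Submodule.finrank_le (S 0 ⊔ S 1)
  rw [Module.finrank_fin_fun] at hle
  rw [le_div_iff₀ (by exact_mod_cast hb)]
  have : 2 * b ≤ a := by omega
  exact_mod_cast this

lemma fracHaemers_fin_zero_le (G : SimpleGraph (Fin 0)) : fracHaemers ℂ G ≤ 0 := by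
  have := fracHaemers_le_of_fin (G := G) (a := 0) (b := 1) (S := fun _ => ⊥) one_pos
    (fun g => g.elim0) (fun g => g.elim0)
  simpa using this

lemma fracHaemers_fin_one_le (G : SimpleGraph (Fin 1)) : fracHaemers ℂ G ≤ 1 := by
  have := fracHaemers_le_of_fin (G := G) (a := 1) (b := 1) (S := fun _ => ⊤) one_pos
    (fun g => by simp) (fun g => by simp [Subsingleton.elim _ g])
  simpa using this

theorem fracHaemersC_admissible_iff (α : ℝ) :
    MonotoneExt (fun (V : Type) (iV : Fintype V) (eV : DecidableEq V)
      (G : SimpleGraph V) => @fracHaemers ℂ _ V iV eV G) α ↔ 1 ≤ α := by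
  refine ⟨fun h => ?_, monotoneExt_of_one_le⟩
  have hle := h 2 1 (fun d => Fin d.1) (fun _ => Fin 2) (fun _ => ⊥) (fun _ => ⊥)
    cohom_two_points_qubit
  rw [Fin.sum_univ_two, Fin.sum_univ_one] at hle
  have h₀ : fracHaemers ℂ (⊥ : SimpleGraph (Fin (0 : Fin 2).1)) ≤ 0 := fracHaemers_fin_zero_le _
  have h₁ : fracHaemers ℂ (⊥ : SimpleGraph (Fin (1 : Fin 2).1)) ≤ 1 := fracHaemers_fin_one_le _
  have h₂ := two_le_fracHaemers_two_points
  have hpos : (0 : ℝ) < 2 ^ α := by positivity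
  norm_num at hle
  have hpow : (2 : ℝ) ^ (1 : ℝ) ≤ 2 ^ α := by
    rw [Real.rpow_one]
    nlinarith [mul_le_mul_of_nonneg_right h₁ hpos.le]
  exact (Real.rpow_le_rpow_left_iff one_lt_two).1 hpow

end NCG
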